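/- Let x† ∈ X, y = A x†, and let x be a solution of the second-order flow with exact datum y. If η ≥ ‖A‖, then: (i) x is bounded on [0,∞); (ii) ẋ is bounded on [0,∞), ∫₀^∞ ‖ẋ(t)‖² dt < ∞, and ẋ(t) → 0 as t → ∞; (iii) ẍ is bounded on [0,∞), ∫₀^∞ ‖ẍ(t)‖² dt < ∞, and ẍ(t) → 0 as t → ∞. -/

import Mathlib

/-!
With `e = x - x†` the flow reads `ẍ + η ẋ + A*A e = 0`. Two Lyapunov functions carry the proof:
`E = ‖ẋ‖² + ‖A e‖²` with `Ė = -2η ‖ẋ‖²`, and `G = ‖η e + ẋ‖² + ‖A e‖²` with `Ġ = -2η ‖A e‖²`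
(`hasDerivWithinAt_energy`, `hasDerivWithinAt_modifiedEnergy`). Hence `L = E + G` satisfies
`L̇ = -2η E`: it is nonincreasing, which bounds `ẋ`, `A e` and `η e + ẋ`, and `E` is integrable,
so `ẋ` and `A e` are square integrable. Moreover `2η t E(t) + L(t)` is nonincreasing, so
`2η t E(t) ≤ L(0)`, and both `ẋ` and `A e` tend to zero. The claims on `ẍ` follow from
`ẍ = -η ẋ - A* (A e)`.
-/

open Set Filter Topology MeasureTheory

variable {X Y : Type*} [NormedAddCommGroup X] [InnerProductSpace ℝ X] [CompleteSpace X]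
  [NormedAddCommGroup Y] [InnerProductSpace ℝ Y] [CompleteSpace Y]

/-- `x` (with first derivative `x'` and second derivative `x''`) is a twice continuously
differentiable solution on `[0,∞)` of the second-order flow `ẍ + η ẋ + A*A x = A* z`. -/
def IsSecondOrderFlow (A : X →L[ℝ] Y) (η : ℝ) (z : Y) (x x' x'' : ℝ → X) : Prop :=
  (∀ t ∈ Set.Ici (0:ℝ), HasDerivWithinAt x (x' t) (Set.Ici 0) t) ∧
  (∀ t ∈ Set.Ici (0:ℝ), HasDerivWithinAt x' (x'' t) (Set.Ici 0) t) ∧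
  ContinuousOn x'' (Set.Ici 0) ∧
  ∀ t ∈ Set.Ici (0:ℝ), x'' t + η • x' t + (ContinuousLinearMap.adjoint A) (A (x t)) =
    (ContinuousLinearMap.adjoint A) z

/-- A function on `[0,∞)` with nonpositive one-sided derivative is nonincreasing. -/
theorem antitoneOn_Ici_of_deriv_nonpos {g g' : ℝ → ℝ}
    (hg : ∀ t ∈ Ici (0:ℝ), HasDerivWithinAt g (g' t) (Ici 0) t)
    (hg' : ∀ t ∈ Ici (0:ℝ), g' t ≤ 0) : AntitoneOn g (Ici 0) :=
  antitoneOn_of_hasDerivWithinAt_nonpos (convex_Ici 0)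
    (fun t ht => (hg t ht).continuousWithinAt)
    (fun t ht => (hg t (interior_subset ht)).mono interior_subset)
    (fun t ht => hg' t (interior_subset ht))

/-- A nonnegative function nonincreasing on `[0,∞)` has an integrable derivative, since it converges
at infinity. -/
theorem integrableOn_Ici_of_deriv_nonpos {g g' : ℝ → ℝ}
    (hg : ∀ t ∈ Ici (0:ℝ), HasDerivWithinAt g (g' t) (Ici 0) t)
    (hg' : ∀ t ∈ Ici (0:ℝ), g' t ≤ 0) (hg0 : ∀ t, 0 ≤ g t) :
    IntegrableOn g' (Ici 0) := by
  have hanti := antitoneOn_Ici_of_deriv_nonpos hg hg'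
  have hmax : Antitone (fun t => g (max 0 t)) := fun s t hst =>
    hanti (le_max_left 0 s) (le_max_left 0 t) (max_le_max le_rfl hst)
  have hlim := tendsto_atTop_ciInf hmax ⟨0, by rintro _ ⟨t, rfl⟩; exact hg0 _⟩
  have hlim' : Tendsto g atTop (𝓝 (⨅ t, g (max 0 t))) := by
    refine hlim.congr' ?_
    filter_upwards [eventually_ge_atTop (0:ℝ)] with t ht
    rw [max_eq_right ht]
  rw [integrableOn_Ici_iff_integrableOn_Ioi]
  exact integrableOn_Ioi_deriv_of_nonpos (hg 0 self_mem_Ici).continuousWithinAt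
    (fun t ht => (hg t ht.out.le).hasDerivAt (Ici_mem_nhds ht))
    (fun t ht => hg' t ht.out.le) hlim'

theorem IsSecondOrderFlow.accel_eq {A : X →L[ℝ] Y} {η : ℝ} {xdag : X} {x x' x'' : ℝ → X}
    (hx : IsSecondOrderFlow A η (A xdag) x x' x'') {t : ℝ} (ht : t ∈ Ici (0:ℝ)) :
    x'' t = -(η • x' t) - (ContinuousLinearMap.adjoint A) (A (x t - xdag)) := by
  have h := hx.2.2.2 t ht
  rw [map_sub, map_sub, ← h]
  abel

theorem IsSecondOrderFlow.hasDerivWithinAt_residual {A : X →L[ℝ] Y} {η : ℝ} {xdag : X}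
    {x x' x'' : ℝ → X} (hx : IsSecondOrderFlow A η (A xdag) x x' x'') {t : ℝ}
    (ht : t ∈ Ici (0:ℝ)) :
    HasDerivWithinAt (fun s => A (x s - xdag)) (A (x' t)) (Ici 0) t :=
  A.hasFDerivAt.comp_hasDerivWithinAt t ((hx.1 t ht).sub_const xdag)

/-- The energy `‖ẋ‖² + ‖A e‖²` is dissipated at rate `2η ‖ẋ‖²`. -/
theorem IsSecondOrderFlow.hasDerivWithinAt_energy {A : X →L[ℝ] Y} {η : ℝ} {xdag : X}
    {x x' x'' : ℝ → X} (hx : IsSecondOrderFlow A η (A xdag) x x' x'') {t : ℝ}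
    (ht : t ∈ Ici (0:ℝ)) :
    HasDerivWithinAt (fun s => ‖x' s‖ ^ 2 + ‖A (x s - xdag)‖ ^ 2)
      (-(2 * η * ‖x' t‖ ^ 2)) (Ici 0) t := by
  refine ((hx.2.1 t ht).norm_sq.add (hx.hasDerivWithinAt_residual ht).norm_sq).congr_deriv ?_
  rw [hx.accel_eq ht, inner_sub_right, inner_neg_right, inner_smul_right,
    ContinuousLinearMap.adjoint_inner_right, real_inner_self_eq_norm_sq,
    real_inner_comm (A (x t - xdag))]
  ring

/-- The modified energy `‖η e + ẋ‖² + ‖A e‖²` is dissipated at rate `2η ‖A e‖²`: the derivative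
of `η e + ẋ` is `-A* (A e)`, and the cross term `⟪A e, A ẋ⟫` cancels. -/
theorem IsSecondOrderFlow.hasDerivWithinAt_modifiedEnergy {A : X →L[ℝ] Y} {η : ℝ} {xdag : X}
    {x x' x'' : ℝ → X} (hx : IsSecondOrderFlow A η (A xdag) x x' x'') {t : ℝ}
    (ht : t ∈ Ici (0:ℝ)) :
    HasDerivWithinAt (fun s => ‖η • (x s - xdag) + x' s‖ ^ 2 + ‖A (x s - xdag)‖ ^ 2)
      (-(2 * η * ‖A (x t - xdag)‖ ^ 2)) (Ici 0) t := by
  have h1 : HasDerivWithinAt (fun s => η • (x s - xdag) + x' s)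
      (-(ContinuousLinearMap.adjoint A) (A (x t - xdag))) (Ici 0) t := by
    refine ((((hx.1 t ht).sub_const xdag).const_smul η).add (hx.2.1 t ht)).congr_deriv ?_
    rw [hx.accel_eq ht]
    abel
  refine (h1.norm_sq.add (hx.hasDerivWithinAt_residual ht).norm_sq).congr_deriv ?_
  rw [inner_neg_right, ContinuousLinearMap.adjoint_inner_right, map_add, map_smul,
    inner_add_left, real_inner_smul_left, real_inner_self_eq_norm_sq,
    real_inner_comm (A (x t - xdag))]
  ring

/-- long-term behaviour of the second-order flow with exact data `y = A x†`
when `η ≥ ‖A‖`: `x`, `ẋ`, `ẍ` are bounded on `[0,∞)`, `ẋ, ẍ ∈ L²([0,∞), X)` and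
`ẋ(t) → 0`, `ẍ(t) → 0` as `t → ∞`. -/
theorem flow_longterm_behaviour_exact_data (A : X →L[ℝ] Y) (η : ℝ) (hη : 0 < η)
    (xdag : X) (x x' x'' : ℝ → X) (hx : IsSecondOrderFlow A η (A xdag) x x' x'')
    (hηA : ‖A‖ ≤ η) :
    (∃ M : ℝ, ∀ t ∈ Set.Ici (0:ℝ), ‖x t‖ ≤ M) ∧
    ((∃ M : ℝ, ∀ t ∈ Set.Ici (0:ℝ), ‖x' t‖ ≤ M) ∧
      MeasureTheory.IntegrableOn (fun t => ‖x' t‖ ^ 2) (Set.Ici 0) ∧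
      Filter.Tendsto x' Filter.atTop (nhds 0)) ∧
    ((∃ M : ℝ, ∀ t ∈ Set.Ici (0:ℝ), ‖x'' t‖ ≤ M) ∧
      MeasureTheory.IntegrableOn (fun t => ‖x'' t‖ ^ 2) (Set.Ici 0) ∧
      Filter.Tendsto x'' Filter.atTop (nhds 0)) := by
  set E : ℝ → ℝ := fun s => ‖x' s‖ ^ 2 + ‖A (x s - xdag)‖ ^ 2 with hE
  set G : ℝ → ℝ := fun s => ‖η • (x s - xdag) + x' s‖ ^ 2 + ‖A (x s - xdag)‖ ^ 2 with hG
  have hE0 : ∀ t, 0 ≤ E t := fun t => by simp only [hE]; positivity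
  have hG0 : ∀ t, 0 ≤ G t := fun t => by simp only [hG]; positivity
  have hL : ∀ t ∈ Ici (0:ℝ), HasDerivWithinAt (fun s => E s + G s) (-(2 * η * E t)) (Ici 0) t := by
    intro t ht
    refine ((hx.hasDerivWithinAt_energy ht).add
      (hx.hasDerivWithinAt_modifiedEnergy ht)).congr_deriv ?_
    simp only [hE]
    ring
  have hL' : ∀ t ∈ Ici (0:ℝ), -(2 * η * E t) ≤ 0 := fun t _ => by
    have := hE0 t
    rw [neg_nonpos]
    positivity
  set C : ℝ := E 0 + G 0 with hC
  have hLC : ∀ t ∈ Ici (0:ℝ), E t + G t ≤ C := fun t ht =>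
    antitoneOn_Ici_of_deriv_nonpos hL hL' self_mem_Ici ht ht
  -- `2η t E(t) + L(t)` is nonincreasing, so `E` decays like `1 / t`.
  have hdecay : ∀ t ∈ Ici (0:ℝ), 2 * η * (t * E t) ≤ C := by
    intro t ht
    have hd : ∀ t ∈ Ici (0:ℝ), HasDerivWithinAt (fun s => 2 * η * (s * E s) + (E s + G s))
        (-(4 * η ^ 2 * (t * ‖x' t‖ ^ 2))) (Ici 0) t := by
      intro t ht
      refine ((((hasDerivWithinAt_id t (Ici 0)).mul
        (hx.hasDerivWithinAt_energy ht)).const_mul (2 * η)).add (hL t ht)).congr_deriv ?_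
      simp only [hE, id]
      ring
    have hanti := antitoneOn_Ici_of_deriv_nonpos hd (fun t ht => by
      have : 0 ≤ t := ht
      rw [neg_nonpos]
      positivity)
    have h := hanti self_mem_Ici ht ht
    simp only [zero_mul, mul_zero, zero_add] at h
    linarith [hE0 t, hG0 t]
  have hEint : IntegrableOn E (Ici 0) := by
    have h := integrableOn_Ici_of_deriv_nonpos hL hL' (fun t => add_nonneg (hE0 t) (hG0 t))
    have h2 := h.const_mul (-(2 * η))⁻¹
    refine IntegrableOn.congr_fun h2 (fun t _ => ?_) measurableSet_Ici
    field_simp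
  have hElim : Tendsto E atTop (𝓝 0) := by
    have h : Tendsto (fun t : ℝ => C / (2 * η) / t) atTop (𝓝 0) :=
      tendsto_const_nhds.div_atTop tendsto_id
    refine squeeze_zero' (Eventually.of_forall hE0) ?_ h
    filter_upwards [eventually_gt_atTop (0:ℝ)] with t ht
    rw [le_div_iff₀ ht, le_div_iff₀ (by positivity)]
    linarith [hdecay t ht.le]
  have hv : ∀ t, ‖x' t‖ ^ 2 ≤ E t := fun t => by
    simp only [hE]; linarith [sq_nonneg ‖A (x t - xdag)‖]
  have hacc : ∀ t ∈ Ici (0:ℝ), ‖x'' t‖ ^ 2 ≤ 2 * (η ^ 2 + ‖A‖ ^ 2) * E t := by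
    intro t ht
    have h1 : ‖x'' t‖ ≤ η * ‖x' t‖ + ‖A‖ * ‖A (x t - xdag)‖ := by
      rw [hx.accel_eq ht]
      refine (norm_sub_le _ _).trans (add_le_add ?_ ?_)
      · rw [norm_neg, norm_smul, Real.norm_of_nonneg hη.le]
      · refine (ContinuousLinearMap.le_opNorm _ _).trans_eq ?_
        rw [LinearIsometryEquiv.norm_map]
    have h2 : ‖x'' t‖ ^ 2 ≤ (η * ‖x' t‖ + ‖A‖ * ‖A (x t - xdag)‖) ^ 2 :=
      pow_le_pow_left₀ (norm_nonneg _) h1 2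
    simp only [hE]
    nlinarith [sq_nonneg (η * ‖x' t‖ - ‖A‖ * ‖A (x t - xdag)‖),
      sq_nonneg (η * ‖A (x t - xdag)‖), sq_nonneg (‖A‖ * ‖x' t‖)]
  have hx'cont : ContinuousOn x' (Ici 0) := fun t ht => (hx.2.1 t ht).continuousWithinAt
  have hvC : ∀ t ∈ Ici (0:ℝ), ‖x' t‖ ≤ √C := fun t ht =>
    Real.le_sqrt_of_sq_le (by linarith [hv t, hLC t ht, hG0 t])
  -- Decay and integrability pass from `E` to functions whose squared norm is at most `K * E`.
  have htend : ∀ (f : ℝ → X) (K : ℝ), (∀ t ∈ Ici (0:ℝ), ‖f t‖ ^ 2 ≤ K * E t) →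
      Tendsto f atTop (𝓝 0) := by
    intro f K hf
    have h1 : Tendsto (fun t => √(K * E t)) atTop (𝓝 0) := by
      simpa using (hElim.const_mul K).sqrt
    refine squeeze_zero_norm' ?_ h1
    filter_upwards [eventually_ge_atTop (0:ℝ)] with t ht
    exact Real.le_sqrt_of_sq_le (hf t ht)
  have hint : ∀ (f : ℝ → X) (K : ℝ), ContinuousOn f (Ici 0) →
      (∀ t ∈ Ici (0:ℝ), ‖f t‖ ^ 2 ≤ K * E t) → IntegrableOn (fun t => ‖f t‖ ^ 2) (Ici 0) := by
    intro f K hfc hf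
    refine Integrable.mono' (hEint.const_mul K)
      ((hfc.norm.pow 2).aestronglyMeasurable measurableSet_Ici) ?_
    filter_upwards [ae_restrict_mem measurableSet_Ici] with t ht
    rw [Real.norm_of_nonneg (by positivity)]
    exact hf t ht
  have hv1 : ∀ t ∈ Ici (0:ℝ), ‖x' t‖ ^ 2 ≤ 1 * E t := fun t _ => by
    rw [one_mul]; exact hv t
  refine ⟨⟨(√C + √C) / η + ‖xdag‖, fun t ht => ?_⟩,
    ⟨⟨√C, hvC⟩, hint x' 1 hx'cont hv1, htend x' 1 hv1⟩,
    ⟨⟨√(2 * (η ^ 2 + ‖A‖ ^ 2) * C), fun t ht => ?_⟩,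
      hint x'' _ hx.2.2.1 hacc, htend x'' _ hacc⟩⟩
  · have h1 : ‖η • (x t - xdag) + x' t‖ ≤ √C := by
      refine Real.le_sqrt_of_sq_le ?_
      have h := hLC t ht
      have h0 := hE0 t
      simp only [hG] at h
      linarith [sq_nonneg ‖A (x t - xdag)‖]
    have h2 : η * ‖x t - xdag‖ ≤ √C + √C := by
      calc η * ‖x t - xdag‖ = ‖(η • (x t - xdag) + x' t) - x' t‖ := by
            rw [add_sub_cancel_right, norm_smul, Real.norm_of_nonneg hη.le]
        _ ≤ _ := (norm_sub_le _ _).trans (add_le_add h1 (hvC t ht))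
    have h3 : ‖x t - xdag‖ ≤ (√C + √C) / η := by
      rw [le_div_iff₀ hη]; linarith
    calc ‖x t‖ = ‖(x t - xdag) + xdag‖ := by rw [sub_add_cancel]
      _ ≤ _ := (norm_add_le _ _).trans (by linarith)
  · refine Real.le_sqrt_of_sq_le ((hacc t ht).trans ?_)
    gcongr
    linarith [hLC t ht, hG0 t]
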